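/- Let Γ be a reduced, non-ascending labeled graph with all labels positive, and let e, f be mobile edges of Γ with f ∉ {e, ē}. Then it is impossible that e can slide over f in Γ (yielding a reduced labeled graph Γ′) and that, in Γ′, f can then slide over ē. -/

import Mathlib

/-! Labeled graphs in the sense of generalized Baumslag–Solitar theory. -/

structure LGraph (V E : Type) where
  o : E → V
  bar : E → E
  bar_bar : ∀ e, bar (bar e) = e
  bar_ne : ∀ e, bar e ≠ e
  lab : E → ℤ

namespace LGraph

variable {V E V' E' : Type}

/-- Terminal vertex of an oriented edge. -/
def t (G : LGraph V E) (e : E) : V := G.o (G.bar e)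

/-- All labels are positive. -/
def Positive (G : LGraph V E) : Prop := ∀ e : E, 0 < G.lab e

/-- No collapsible edge: every label-1 edge is a loop. -/
def Reduced (G : LGraph V E) : Prop := ∀ e : E, G.lab e = 1 → G.o e = G.t e

/-- An `n`-rose: one vertex and `n` pairs of oriented edges. -/
def IsRose (G : LGraph V E) (n : ℕ) : Prop :=
  Nat.card V = 1 ∧ Nat.card E = 2 * n

/-- Modulus of a single oriented edge: `λ(ē)/λ(e)`. -/
def qe (G : LGraph V E) (e : E) : ℚ := (G.lab (G.bar e) : ℚ) / (G.lab e : ℚ)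

/-- Modulus of an edge path. -/
def q (G : LGraph V E) (l : List E) : ℚ := (l.map G.qe).prod

/-- Consecutive edges match up. -/
def IsEdgePath (G : LGraph V E) (l : List E) : Prop :=
  List.Chain' (fun a b => G.t a = G.o b) l

/-- An `e`-edge path. -/
def IsEEdgePath (G : LGraph V E) (e : E) (l : List E) : Prop :=
  G.IsEdgePath l ∧
  (∀ a ∈ l, a ≠ e ∧ a ≠ G.bar e) ∧
  (∀ a ∈ l.head?, G.o a = G.o e) ∧
  ∀ i : Fin l.length, ∃ k : ℤ,
    (G.lab e : ℚ) * G.q (l.take i.1) = (k : ℚ) * (G.lab (l.get i) : ℚ)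

/-- A monotone cycle `(e₁,…,eₛ,e)`. -/
def IsMonotoneCycle (G : LGraph V E) (l : List E) (e : E) : Prop :=
  G.IsEEdgePath (G.bar e) l ∧
  G.t (l.getLastD e) = G.o e ∧
  ∃ k : ℤ, G.q (l ++ [e]) = (k : ℚ)

/-- A strict monotone cycle. -/
def IsStrictMonotoneCycle (G : LGraph V E) (l : List E) (e : E) : Prop :=
  G.IsMonotoneCycle l e ∧ G.q (l ++ [e]) ≠ 1

def HasStrictMonotoneCycle (G : LGraph V E) : Prop :=
  ∃ (l : List E) (e : E), G.IsStrictMonotoneCycle l e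

/-- A strict `e`-integer cycle. -/
def IsStrictIntegerCycle (G : LGraph V E) (e : E) (l : List E) : Prop :=
  G.IsEEdgePath e l ∧ l ≠ [] ∧
  G.t (l.getLastD e) = G.o (l.headD e) ∧
  (∃ k : ℤ, G.q l = (k : ℚ)) ∧ G.q l ≠ 1

/-- A mobile edge. -/
def Mobile (G : LGraph V E) (e : E) : Prop :=
  (∃ l, G.IsStrictMonotoneCycle l e ∨ G.IsStrictMonotoneCycle l (G.bar e)) ∨
  (∃ l, G.IsStrictIntegerCycle e l ∨ G.IsStrictIntegerCycle (G.bar e) l)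

/-- The single slide of `e` over `f` is permitted. -/
def CanSlide (G : LGraph V E) (e f : E) : Prop :=
  f ≠ e ∧ f ≠ G.bar e ∧ G.o f = G.o e ∧ G.lab f ∣ G.lab e

open Classical in
/-- The result of the single slide of `e` over `f`. -/
noncomputable def slide (G : LGraph V E) (e f : E) : LGraph V E where
  o := fun x => if x = e then G.t f else G.o x
  bar := G.bar
  bar_bar := G.bar_bar
  bar_ne := G.bar_ne
  lab := fun x => if x = e then G.lab e * G.lab (G.bar f) / G.lab f else G.lab x

/-- Successively slide `e` over the edges of a path. -/
noncomputable def slidePath : LGraph V E → E → List E → LGraph V E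
  | G, _, [] => G
  | G, e, f :: l => slidePath (G.slide e f) e l

/-- Each single slide in the successive slide of `e` over a path is permitted. -/
def CanSlidePath : LGraph V E → E → List E → Prop
  | _, _, [] => True
  | G, e, f :: l => G.CanSlide e f ∧ CanSlidePath (G.slide e f) e l

/-- Each single slide is permitted and each intermediate graph is reduced. -/
def GoodSlidePath : LGraph V E → E → List E → Prop
  | _, _, [] => True
  | G, e, f :: l => G.CanSlide e f ∧ (G.slide e f).Reduced ∧ GoodSlidePath (G.slide e f) e l

/-- Perform a finite sequence of single slides, given as pairs (slid edge, edge slid over). -/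
noncomputable def slideSeq : LGraph V E → List (E × E) → LGraph V E
  | G, [] => G
  | G, p :: rest => slideSeq (G.slide p.1 p.2) rest

/-- A sequence of permitted single slides, each sliding a mobile edge. -/
def MobileSlideSeq : LGraph V E → List (E × E) → Prop
  | _, [] => True
  | G, p :: rest => G.Mobile p.1 ∧ G.CanSlide p.1 p.2 ∧ MobileSlideSeq (G.slide p.1 p.2) rest

/-- Isomorphism of labeled graphs. -/
def Isom (G : LGraph V E) (G' : LGraph V' E') : Prop :=
  ∃ (φ : V → V') (Φ : E → E'),
    Function.Bijective φ ∧ Function.Bijective Φ ∧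
    (∀ x, G'.o (Φ x) = φ (G.o x)) ∧
    (∀ x, G'.bar (Φ x) = Φ (G.bar x)) ∧
    (∀ x, G'.lab (Φ x) = G.lab x)

open Classical in
/-- The result of the induction move at the loop `e` with multiplier `m`. -/
noncomputable def inductionMove (G : LGraph V E) (e : E) (m : ℤ) : LGraph V E where
  o := G.o
  bar := G.bar
  bar_bar := G.bar_bar
  bar_ne := G.bar_ne
  lab := fun x => if x ≠ e ∧ x ≠ G.bar e ∧ G.o x = G.o e then m * G.lab x else G.lab x

/-- `G'` is obtained from `G` by a single slide move (up to isomorphism). -/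
def IsSlideMove (G : LGraph V E) (G' : LGraph V' E') : Prop :=
  ∃ e f, G.CanSlide e f ∧ Isom G' (G.slide e f)

/-- `G'` is obtained from `G` by a (forward) induction move. -/
def IsInductionMove (G : LGraph V E) (G' : LGraph V' E') : Prop :=
  ∃ (e : E) (m : ℤ), G.o e = G.t e ∧ G.lab e = 1 ∧ 1 ≤ m ∧ m ∣ G.lab (G.bar e) ∧
    Isom G' (G.inductionMove e m)

/-- `G'` is obtained from `G` by an A-move. -/
def IsAMove (G : LGraph V E) (G' : LGraph V' E') : Prop :=
  ∃ (e d : E) (e' : E') (φ : V → V') (Φ : E → E'),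
    G.o e = G.t e ∧ G.lab e = 1 ∧ G.lab (G.bar e) ≠ 1 ∧
    G.o d = G.o e ∧ G.t d ≠ G.o e ∧
    G.lab d ≠ 1 ∧ G.lab (G.bar d) ≠ 1 ∧ G.lab d ∣ G.lab (G.bar e) ∧
    (∀ x : E, G.o x = G.o e → x = e ∨ x = G.bar e ∨ x = d) ∧
    G'.o e' = φ (G.t d) ∧ G'.t e' = φ (G.t d) ∧
    G'.lab e' = G.lab (G.bar d) ∧
    G'.lab (G'.bar e') = G.lab (G.bar d) * G.lab (G.bar e) ∧
    (∀ w₁ w₂ : V, w₁ ≠ G.o e → w₂ ≠ G.o e → φ w₁ = φ w₂ → w₁ = w₂) ∧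
    (∀ v' : V', ∃ w : V, w ≠ G.o e ∧ φ w = v') ∧
    (∀ x : E, x ≠ e → x ≠ G.bar e → x ≠ d → x ≠ G.bar d →
      Φ x ≠ e' ∧ Φ x ≠ G'.bar e' ∧
      G'.o (Φ x) = φ (G.o x) ∧ G'.bar (Φ x) = Φ (G.bar x) ∧ G'.lab (Φ x) = G.lab x) ∧
    (∀ x y : E, x ≠ e → x ≠ G.bar e → x ≠ d → x ≠ G.bar d →
      y ≠ e → y ≠ G.bar e → y ≠ d → y ≠ G.bar d → Φ x = Φ y → x = y) ∧
    (∀ y : E', y ≠ e' → y ≠ G'.bar e' →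
      ∃ x : E, x ≠ e ∧ x ≠ G.bar e ∧ x ≠ d ∧ x ≠ G.bar d ∧ Φ x = y)

/-- A strict ascending loop: a loop with `λ(e) = 1 ≠ λ(ē)`. -/
def HasStrictAscendingLoop (G : LGraph V E) : Prop :=
  ∃ e : E, G.o e = G.t e ∧ G.lab e = 1 ∧ G.lab (G.bar e) ≠ 1

end LGraph

/-- A labeled graph with its vertex and edge types bundled. -/
structure BGraph where
  V : Type
  E : Type
  G : LGraph V E

/-- An elementary deformation move: a slide, an induction move or its inverse,
or an A-move or its inverse. -/
def BGraph.ElemMove (X Y : BGraph) : Prop :=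
  LGraph.IsSlideMove X.G Y.G ∨ LGraph.IsInductionMove X.G Y.G ∨
  LGraph.IsInductionMove Y.G X.G ∨ LGraph.IsAMove X.G Y.G ∨ LGraph.IsAMove Y.G X.G

/-- A finite sequence of elementary moves with all intermediate graphs reduced. -/
def BGraph.MoveSeq : BGraph → BGraph → Prop :=
  Relation.ReflTransGen (fun X Y => X.ElemMove Y ∧ Y.G.Reduced)

/-- A reduced labeled graph is non-ascending if no reduced labeled graph obtained from it
by slide, induction and A-moves (all intermediate graphs reduced) contains a
strict ascending loop. -/
def LGraph.NonAscending {V E : Type} (G : LGraph V E) : Prop :=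
  ∀ Y : BGraph, BGraph.MoveSeq ⟨V, E, G⟩ Y → ¬ Y.G.HasStrictAscendingLoop

/-!
If `e` slides over `f` and `f` then slides over `ē`, then `e` is a loop with `λ(ē) ∣ λ(e)`, so it
is enough to show that such a loop is not mobile.

In a non-ascending graph every monotone cycle `(e₁, …, eₛ, e)` has modulus one: sliding `ē` over
`e₁` leaves a monotone cycle `(e₂, …, eₛ, e)` of the same modulus, so induction reduces to `s = 0`,
where `e` is a loop with `λ(e) ∣ λ(ē)`. If its modulus were not one, an inverse A-move at `e` would
create a strict ascending loop. The slides keep the graph reduced: an edge path carrying the label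
one runs only over loops with both labels one, so an edge whose label becomes one is then a loop.

Now let `e` be a loop with `λ(ē) ∣ λ(e)`. The one-edge monotone cycle `(ē)` gives
`λ(ē) = λ(e)`, so appending `ē` to an `e`-integer cycle gives a monotone cycle of the same modulus,
which is therefore one.
-/

namespace LGraph

variable {V E V' E' : Type} {G : LGraph V E} {e f x : E} {l : List E}

theorem bar_involutive (G : LGraph V E) : Function.Involutive G.bar := G.bar_bar

theorem bar_eq_iff {y : E} : G.bar x = y ↔ x = G.bar y := G.bar_involutive.eq_iff

@[simp]
theorem t_bar : G.t (G.bar e) = G.o e := congrArg G.o (G.bar_bar e)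

theorem q_cons : G.q (f :: l) = G.qe f * G.q l := List.prod_cons

theorem q_append_singleton : G.q (l ++ [e]) = G.q l * G.qe e := by simp [q]

theorem qe_eq_one (hpos : G.Positive) (h : G.lab (G.bar e) = G.lab e) : G.qe e = 1 := by
  rw [qe, h, div_self (mod_cast (hpos e).ne')]

theorem Isom.refl (G : LGraph V E) : Isom G G :=
  ⟨id, id, Function.bijective_id, Function.bijective_id, fun _ => rfl, fun _ => rfl, fun _ => rfl⟩

/-! ### Slide moves -/

@[simp]
theorem slide_bar : (G.slide e f).bar = G.bar := rfl

@[simp]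
theorem slide_o_self : (G.slide e f).o e = G.t f := if_pos rfl

theorem slide_o_of_ne (h : x ≠ e) : (G.slide e f).o x = G.o x := if_neg h

theorem slide_lab_self : (G.slide e f).lab e = G.lab e * G.lab (G.bar f) / G.lab f := if_pos rfl

theorem slide_lab_of_ne (h : x ≠ e) : (G.slide e f).lab x = G.lab x := if_neg h

theorem slide_t_bar : (G.slide e f).t (G.bar e) = G.t f := by
  rw [t, slide_bar, G.bar_bar, slide_o_self]

theorem slide_t_of_ne (h : x ≠ G.bar e) : (G.slide e f).t x = G.t x :=
  slide_o_of_ne (mt bar_eq_iff.1 h)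

@[simp]
theorem slide_t_self : (G.slide e f).t e = G.t e := slide_t_of_ne (G.bar_ne e).symm

theorem slide_qe_of_ne (h : x ≠ e) (hbar : x ≠ G.bar e) : (G.slide e f).qe x = G.qe x := by
  rw [qe, qe, slide_bar, slide_lab_of_ne h, slide_lab_of_ne (mt bar_eq_iff.1 hbar)]

theorem slide_q_of_forall_ne (h : ∀ a ∈ l, a ≠ e ∧ a ≠ G.bar e) : (G.slide e f).q l = G.q l :=
  congrArg List.prod (List.map_congr_left fun a ha => slide_qe_of_ne (h a ha).1 (h a ha).2)

theorem cast_slide_lab_self (h : G.lab f ∣ G.lab e) :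
    ((G.slide e f).lab e : ℚ) = G.lab e * G.qe f := by
  rw [slide_lab_self, Int.cast_div_charZero (h.mul_right _), Int.cast_mul, mul_div_assoc, qe]

theorem slide_qe_bar (h : G.lab f ∣ G.lab e) :
    (G.slide e f).qe (G.bar e) = G.qe f * G.qe (G.bar e) := by
  rw [qe, slide_bar, G.bar_bar, cast_slide_lab_self h, slide_lab_of_ne (G.bar_ne e)]
  simp only [qe, G.bar_bar]
  ring

theorem slide_eq_self (hf : G.o e = G.t f) (hlab : G.lab f = 1) (hbar : G.lab (G.bar f) = 1) :
    G.slide e f = G := by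
  have ho : (G.slide e f).o = G.o := by
    funext x
    obtain rfl | hx := eq_or_ne x e
    exacts [slide_o_self.trans hf.symm, slide_o_of_ne hx]
  have hl : (G.slide e f).lab = G.lab := by
    funext x
    obtain rfl | hx := eq_or_ne x e
    exacts [by rw [slide_lab_self, hlab, hbar, mul_one, Int.ediv_one], slide_lab_of_ne hx]
  calc G.slide e f
      = ⟨(G.slide e f).o, G.bar, G.bar_bar, G.bar_ne, (G.slide e f).lab⟩ := rfl
    _ = G := by rw [ho, hl]

theorem Positive.slide (hpos : G.Positive) (h : G.lab f ∣ G.lab e) : (G.slide e f).Positive := by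
  intro x
  obtain rfl | hx := eq_or_ne x e
  · rw [slide_lab_self]
    exact Int.ediv_pos_of_pos_of_dvd (mul_pos (hpos x) (hpos _)) (hpos f).le (h.mul_right _)
  · rw [slide_lab_of_ne hx]
    exact hpos x

theorem Reduced.slide (hred : G.Reduced) (hself : (G.slide e f).lab e = 1 → G.t f = G.t e)
    (hbar : G.lab (G.bar e) = 1 → G.t f = G.t e) : (G.slide e f).Reduced := by
  intro x hx
  obtain rfl | hxe := eq_or_ne x e
  · rw [slide_o_self, slide_t_self, hself hx]
  rw [slide_lab_of_ne hxe] at hx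
  rw [slide_o_of_ne hxe]
  obtain rfl | hxbar := eq_or_ne x (G.bar e)
  · rw [slide_t_bar, hbar hx, t]
  · rw [slide_t_of_ne hxbar, hred x hx]

/-! ### Non-ascending graphs -/

theorem NonAscending.of_elemMove {H : LGraph V' E'} (hna : G.NonAscending)
    (hmove : BGraph.ElemMove ⟨V, E, G⟩ ⟨V', E', H⟩) (hH : H.Reduced) : H.NonAscending :=
  fun Y hY => hna Y (.head (b := (⟨V', E', H⟩ : BGraph)) ⟨hmove, hH⟩ hY)

theorem NonAscending.slide (hna : G.NonAscending) (h : G.CanSlide e f)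
    (hred : (G.slide e f).Reduced) : (G.slide e f).NonAscending :=
  hna.of_elemMove (.inl ⟨e, f, h, Isom.refl _⟩) hred

theorem NonAscending.not_hasStrictAscendingLoop (hna : G.NonAscending) :
    ¬ G.HasStrictAscendingLoop :=
  hna ⟨V, E, G⟩ .refl

theorem NonAscending.lab_bar_eq_one (hna : G.NonAscending) (hloop : G.o e = G.t e)
    (h : G.lab e = 1) : G.lab (G.bar e) = 1 :=
  by_contra fun hbar => hna.not_hasStrictAscendingLoop ⟨e, hloop, h, hbar⟩

open Classical in
/-- The result of the inverse A-move at the loop `e`: a new vertex `none` carries the loop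
`Sum.inl e`, now with labels `1` and `a`, and is joined to the old base point of `e` by the edge
`Sum.inr true`, with label `b`, whose reverse `Sum.inr false` inherits the label of `e`. The A-move
at `Sum.inl e` restores `G` when `λ(ē) = λ(e) * a` and `b ∣ a`. -/
noncomputable def inverseAMove (G : LGraph V E) (e : E) (a b : ℤ) :
    LGraph (Option V) (E ⊕ Bool) where
  o := Sum.elim (fun x => if x = e ∨ x = G.bar e then none else some (G.o x))
    (fun i => if i then none else some (G.o e))
  bar := Sum.map G.bar not
  bar_bar := by rintro (x | i) <;> simp [G.bar_bar]
  bar_ne := by rintro (x | i) <;> simp [G.bar_ne]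
  lab := Sum.elim (fun x => if x = e then 1 else if x = G.bar e then a else G.lab x)
    (fun i => if i then b else G.lab e)

section inverseAMove

variable {a b : ℤ}

theorem reduced_inverseAMove (hred : G.Reduced) (he : G.lab e ≠ 1) (hb : b ≠ 1) :
    (G.inverseAMove e a b).Reduced := by
  rintro (x | _ | _) hx
  · by_cases hxe : x = e ∨ x = G.bar e
    · rcases hxe with rfl | rfl <;> simp [inverseAMove, t, G.bar_bar]
    · obtain ⟨hxe, hxbar⟩ := not_or.1 hxe
      have hlab : G.lab x = 1 := by simpa [inverseAMove, hxe, hxbar] using hx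
      simpa [inverseAMove, t, hxe, hxbar, bar_eq_iff, G.bar_bar] using hred x hlab
  · exact absurd hx he
  · exact absurd hx hb

theorem hasStrictAscendingLoop_inverseAMove (ha : a ≠ 1) :
    (G.inverseAMove e a b).HasStrictAscendingLoop :=
  ⟨.inl e, by simp [inverseAMove, t], by simp [inverseAMove],
    by simpa [inverseAMove, G.bar_ne] using ha⟩

theorem eq_of_inverseAMove_o_eq_none {x : E ⊕ Bool} (h : (G.inverseAMove e a b).o x = none) :
    x = .inl e ∨ x = .inl (G.bar e) ∨ x = .inr true := by
  obtain x | _ | _ := x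
  · by_contra hx
    obtain ⟨hxe, hxbar⟩ : x ≠ e ∧ x ≠ G.bar e := by simpa using hx
    simp [inverseAMove, hxe, hxbar] at h
  · exact absurd h (Option.some_ne_none _)
  · exact .inr (.inr rfl)

theorem exists_eq_inl_of_ne {x : E ⊕ Bool} (he : x ≠ .inl e)
    (hbar : x ≠ (G.inverseAMove e a b).bar (.inl e)) (hd : x ≠ .inr true)
    (hd_bar : x ≠ (G.inverseAMove e a b).bar (.inr true)) :
    ∃ y, y ≠ e ∧ y ≠ G.bar e ∧ x = .inl y := by
  obtain x | _ | _ := x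
  · exact ⟨x, mt (congrArg _) he, mt (congrArg _) hbar, rfl⟩
  · exact absurd rfl hd_bar
  · exact absurd rfl hd

theorem isAMove_inverseAMove (hloop : G.o e = G.t e) (he : G.lab e ≠ 1)
    (hbar : G.lab (G.bar e) = G.lab e * a) (ha : a ≠ 1) (hb : b ≠ 1) (hba : b ∣ a) :
    IsAMove (G.inverseAMove e a b) G := by
  have hlab_bar : (G.inverseAMove e a b).lab (.inl (G.bar e)) = a := by
    simp [inverseAMove, G.bar_ne]
  have ho : (G.inverseAMove e a b).o (.inl e) = none := by simp [inverseAMove]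
  have hlab : (G.inverseAMove e a b).lab (.inl e) = 1 := by simp [inverseAMove]
  refine ⟨.inl e, .inr true, e, fun v => v.getD (G.o e), Sum.elim id fun _ => e,
    by simp [inverseAMove, t], hlab, hlab_bar.trans_ne ha, ho.symm,
    by simp [inverseAMove, t], hb, he, hba.trans (dvd_of_eq hlab_bar.symm),
    fun x hx => eq_of_inverseAMove_o_eq_none (hx.trans ho), rfl, hloop.symm, rfl,
    hbar.trans (congrArg _ hlab_bar.symm), ?_, fun v => ⟨some v, by simp [ho], rfl⟩, ?_, ?_, ?_⟩
  · rw [ho]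
    rintro (_ | v) (_ | w) hv hw h
    exacts [rfl, absurd rfl hv, absurd rfl hw, congrArg some h]
  · intro x hxe hxbar hxd hxd_bar
    obtain ⟨y, hye, hybar, rfl⟩ := exists_eq_inl_of_ne hxe hxbar hxd hxd_bar
    exact ⟨hye, hybar, by simp [inverseAMove, hye, hybar], rfl, by simp [inverseAMove, hye, hybar]⟩
  · intro x x' hxe hxbar hxd hxd_bar hxe' hxbar' hxd' hxd_bar' h
    obtain ⟨y, -, -, rfl⟩ := exists_eq_inl_of_ne hxe hxbar hxd hxd_bar
    obtain ⟨y', -, -, rfl⟩ := exists_eq_inl_of_ne hxe' hxbar' hxd' hxd_bar'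
    exact congrArg _ h
  · exact fun y hye hybar => ⟨.inl y, mt Sum.inl.inj hye, mt Sum.inl.inj hybar,
      Sum.inl_ne_inr, Sum.inl_ne_inr, rfl⟩

end inverseAMove

theorem NonAscending.lab_bar_eq_lab (hna : G.NonAscending) (hred : G.Reduced)
    (hloop : G.o e = G.t e) (hdvd : G.lab e ∣ G.lab (G.bar e)) : G.lab (G.bar e) = G.lab e := by
  by_cases he : G.lab e = 1
  · rw [he, hna.lab_bar_eq_one hloop he]
  obtain ⟨a, hbar⟩ := hdvd
  by_contra hne
  have ha : a ≠ 1 := by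
    rintro rfl
    exact hne (hbar.trans (mul_one _))
  have hmove := isAMove_inverseAMove hloop he hbar ha ha dvd_rfl
  exact (hna.of_elemMove (.inr (.inr (.inr (.inr hmove))))
    (reduced_inverseAMove hred he ha)).not_hasStrictAscendingLoop
      (hasStrictAscendingLoop_inverseAMove ha)

/-! ### Sliding along edge paths -/

theorem slide_t_getLastD (h : ∀ a ∈ l, a ≠ G.bar e) :
    (G.slide e f).t (l.getLastD (G.bar e)) = G.t (l.getLastD f) := by
  cases l with
  | nil => exact slide_t_bar
  | cons b l =>
    rw [List.getLastD_cons, List.getLastD_cons]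
    exact slide_t_of_ne (h _ List.getLastD_mem_cons)

theorem IsEEdgePath.canSlide (h : G.IsEEdgePath e (f :: l)) : G.CanSlide e f := by
  obtain ⟨-, hne, hhead, hdvd⟩ := h
  obtain ⟨k, hk⟩ := hdvd ⟨0, Nat.zero_lt_succ _⟩
  have hk : (G.lab e : ℚ) = k * G.lab f := by simpa [q] using hk
  exact ⟨(hne f List.mem_cons_self).1, (hne f List.mem_cons_self).2, hhead f rfl,
    Dvd.intro_left k (mod_cast hk.symm)⟩

theorem IsEEdgePath.ne_of_mem (h : G.IsEEdgePath e (f :: l)) :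
    ∀ a ∈ l, a ≠ e ∧ a ≠ G.bar e :=
  fun a ha => h.2.1 a (List.mem_cons_of_mem f ha)

theorem IsEEdgePath.slide (h : G.IsEEdgePath e (f :: l)) : (G.slide e f).IsEEdgePath e l := by
  have hdvdf := h.canSlide.2.2.2
  have hne := h.ne_of_mem
  obtain ⟨hpath, -, -, hdvd⟩ := h
  obtain ⟨hhead, hpath⟩ := List.isChain_cons.1 hpath
  refine ⟨hpath.imp_of_mem_imp fun x y hx hy hxy => ?_, hne, fun x hx => ?_, fun i => ?_⟩
  · rw [slide_t_of_ne (hne x hx).2, slide_o_of_ne (hne y hy).1, hxy]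
  · rw [slide_o_of_ne (hne x (List.mem_of_mem_head? hx)).1, slide_o_self, hhead x hx]
  · obtain ⟨k, hk⟩ := hdvd i.succ
    have hnei := hne (l.get i) (l.get_mem i)
    refine ⟨k, ?_⟩
    rw [slide_q_of_forall_ne fun x hx => hne x (List.mem_of_mem_take hx),
      slide_lab_of_ne hnei.1, cast_slide_lab_self hdvdf, mul_assoc, ← q_cons]
    exact hk

theorem IsEEdgePath.t_getLastD_eq_o_of_lab_eq_one (h : G.IsEEdgePath e l) (hpos : G.Positive)
    (he : G.lab e = 1)
    (hloop : ∀ x ∈ l, G.lab x = 1 → G.o x = G.t x ∧ G.lab (G.bar x) = 1) :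
    G.t (l.getLastD (G.bar e)) = G.o e := by
  induction l with
  | nil => exact t_bar
  | cons f l ih =>
    obtain ⟨-, -, hof, hdvd⟩ := h.canSlide
    have hlab : G.lab f = 1 := Int.eq_one_of_dvd_one (hpos f).le (he ▸ hdvd)
    obtain ⟨hf, hbar⟩ := hloop f List.mem_cons_self hlab
    have hslide : G.slide e f = G := slide_eq_self (hof.symm.trans hf) hlab hbar
    have hl : G.IsEEdgePath e l := hslide ▸ h.slide
    calc G.t ((f :: l).getLastD (G.bar e))
        = (G.slide e f).t (l.getLastD (G.bar e)) := by
          rw [List.getLastD_cons, slide_t_getLastD fun x hx => (h.ne_of_mem x hx).2]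
      _ = G.t (l.getLastD (G.bar e)) := by rw [hslide]
      _ = G.o e := ih hl fun x hx => hloop x (List.mem_cons_of_mem f hx)

/-! ### Monotone cycles -/

theorem IsMonotoneCycle.canSlide (h : G.IsMonotoneCycle (f :: l) e) : G.CanSlide (G.bar e) f :=
  h.1.canSlide

theorem IsMonotoneCycle.slide_q (h : G.IsMonotoneCycle (f :: l) e) :
    (G.slide (G.bar e) f).q (l ++ [e]) = G.q (f :: l ++ [e]) := by
  have hqe := slide_qe_bar h.canSlide.2.2.2
  rw [G.bar_bar] at hqe
  rw [q_append_singleton, slide_q_of_forall_ne h.1.ne_of_mem, hqe, q_append_singleton, q_cons]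
  ring

theorem IsMonotoneCycle.slide (h : G.IsMonotoneCycle (f :: l) e) :
    (G.slide (G.bar e) f).IsMonotoneCycle l e := by
  refine ⟨h.1.slide, ?_, h.slide_q.symm ▸ h.2.2⟩
  have hend := slide_t_getLastD (e := G.bar e) (f := f) fun x hx => (h.1.ne_of_mem x hx).2
  rw [G.bar_bar] at hend
  rw [hend, slide_o_of_ne (G.bar_ne e).symm, ← h.2.1, List.getLastD_cons]

theorem IsMonotoneCycle.slide_reduced (h : G.IsMonotoneCycle (f :: l) e) (hpos : G.Positive)
    (hred : G.Reduced) (hna : G.NonAscending) : (G.slide (G.bar e) f).Reduced := by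
  obtain ⟨-, -, hof, hdvd⟩ := h.canSlide
  have hloop (x : E) (hx : G.lab x = 1) : G.o x = G.t x ∧ G.lab (G.bar x) = 1 :=
    ⟨hred x hx, hna.lab_bar_eq_one (hred x hx) hx⟩
  refine hred.slide (fun hslide => ?_) (fun he => ?_)
  · have hloop_slide : ∀ x ∈ l, (G.slide (G.bar e) f).lab x = 1 →
        (G.slide (G.bar e) f).o x = (G.slide (G.bar e) f).t x ∧
          (G.slide (G.bar e) f).lab (G.bar x) = 1 := by
      intro x hx hlab
      obtain ⟨hxe, hxbar⟩ := h.1.ne_of_mem x hx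
      rw [slide_lab_of_ne hxe] at hlab
      rw [slide_o_of_ne hxe, slide_t_of_ne hxbar, slide_lab_of_ne (mt bar_eq_iff.1 hxbar)]
      exact hloop x hlab
    have hend : G.o e = G.t f := by
      have hend :=
        h.slide.1.t_getLastD_eq_o_of_lab_eq_one (hpos.slide hdvd) hslide hloop_slide
      rwa [slide_bar, G.bar_bar, h.slide.2.1, slide_o_self,
        slide_o_of_ne (G.bar_ne e).symm] at hend
    rw [← hend, t_bar]
  · rw [G.bar_bar] at he
    have hf : G.lab f = 1 := Int.eq_one_of_dvd_one (hpos f).le ((hloop e he).2 ▸ hdvd)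
    rw [t_bar, (hloop e he).1, ← hred f hf, hof, t]

theorem NonAscending.q_eq_one_of_isMonotoneCycle (hna : G.NonAscending) (hpos : G.Positive)
    (hred : G.Reduced) (h : G.IsMonotoneCycle l e) : G.q (l ++ [e]) = 1 := by
  induction l generalizing G with
  | nil =>
    obtain ⟨-, hloop, k, hk⟩ := h
    have hqe : G.q ([] ++ [e]) = G.qe e := by simp [q]
    rw [hqe] at hk ⊢
    rw [qe, div_eq_iff (mod_cast (hpos e).ne')] at hk
    exact qe_eq_one hpos (hna.lab_bar_eq_lab hred hloop.symm (Dvd.intro_left k (mod_cast hk.symm)))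
  | cons f l ih =>
    have hslide := h.slide_reduced hpos hred hna
    rw [← h.slide_q]
    exact ih (hna.slide h.canSlide hslide) (hpos.slide h.canSlide.2.2.2) hslide h.slide

/-! ### Mobile edges -/

theorem IsEEdgePath.isMonotoneCycle_bar (h : G.IsEEdgePath e l)
    (hend : G.t (l.getLastD (G.bar e)) = G.t e) (hint : ∃ k : ℤ, G.q (l ++ [G.bar e]) = k) :
    G.IsMonotoneCycle l (G.bar e) :=
  ⟨(G.bar_bar e).symm ▸ h, hend, hint⟩

theorem NonAscending.not_isStrictIntegerCycle_of_loop (hna : G.NonAscending) (hpos : G.Positive)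
    (hred : G.Reduced) (hloop : G.o e = G.t e) (hlab : G.lab (G.bar e) = G.lab e) :
    ¬ G.IsStrictIntegerCycle e l := by
  rintro ⟨hpath, hnil, hend, hint, hne⟩
  have hq : G.q (l ++ [G.bar e]) = G.q l := by
    rw [q_append_singleton, qe_eq_one hpos (by rw [G.bar_bar, hlab]), mul_one]
  have hend : G.t (l.getLastD (G.bar e)) = G.t e := by
    obtain ⟨b, l, rfl⟩ := List.exists_cons_of_ne_nil hnil
    rw [List.getLastD_cons] at hend ⊢
    exact hend.trans ((hpath.2.2.1 b rfl).trans hloop)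
  have hcycle : G.IsMonotoneCycle l (G.bar e) := hpath.isMonotoneCycle_bar hend (by rwa [hq])
  exact hne (hq.symm.trans (hna.q_eq_one_of_isMonotoneCycle hpos hred hcycle))

theorem NonAscending.not_mobile_of_loop (hna : G.NonAscending) (hpos : G.Positive)
    (hred : G.Reduced) (hloop : G.o e = G.t e) (hdvd : G.lab (G.bar e) ∣ G.lab e) :
    ¬ G.Mobile e := by
  have hloop_bar : G.o (G.bar e) = G.t (G.bar e) := by rw [t_bar, hloop, t]
  have hlab : G.lab e = G.lab (G.bar e) := by
    simpa only [G.bar_bar] using hna.lab_bar_eq_lab hred hloop_bar (by rwa [G.bar_bar])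
  rintro (⟨l, h | h⟩ | ⟨l, h | h⟩)
  · exact h.2 (hna.q_eq_one_of_isMonotoneCycle hpos hred h.1)
  · exact h.2 (hna.q_eq_one_of_isMonotoneCycle hpos hred h.1)
  · exact hna.not_isStrictIntegerCycle_of_loop hpos hred hloop hlab.symm h
  · exact hna.not_isStrictIntegerCycle_of_loop hpos hred hloop_bar (by rw [G.bar_bar, hlab]) h

end LGraph

theorem stmt9_general {V E : Type} (G : LGraph V E) (hpos : G.Positive) (hred : G.Reduced)
    (hna : G.NonAscending) (e f : E) (hme : G.Mobile e) :
    ¬ (G.CanSlide e f ∧ (G.slide e f).CanSlide f (G.bar e)) := by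
  rintro ⟨⟨hfe, -, hof, hdvd_f⟩, -, -, hbar, hdvd_bar⟩
  rw [LGraph.slide_o_of_ne (G.bar_ne e), LGraph.slide_o_of_ne hfe] at hbar
  rw [LGraph.slide_lab_of_ne (G.bar_ne e), LGraph.slide_lab_of_ne hfe] at hdvd_bar
  have hloop : G.o e = G.t e := (hbar.trans hof).symm
  exact hna.not_mobile_of_loop hpos hred hloop (hdvd_bar.trans hdvd_f) hme

/-- (Lemma 4.3(g)) In a reduced non-ascending positively-labeled graph,
for mobile edges `e, f` with `f ∉ {e, ē}`, the slide of `e` over `f` (to a reduced graph)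
followed by a slide of `f` over `ē` is impossible. -/
theorem stmt9 {V E : Type} [Finite V] [Finite E] (G : LGraph V E)
    (hpos : G.Positive) (hred : G.Reduced) (hna : G.NonAscending)
    (e f : E) (hme : G.Mobile e) (hmf : G.Mobile f)
    (hfe : f ≠ e) (hfebar : f ≠ G.bar e) :
    ¬ (G.CanSlide e f ∧ (G.slide e f).Reduced ∧ (G.slide e f).CanSlide f (G.bar e)) := by
  rintro ⟨hslide_e, -, hslide_f⟩
  exact stmt9_general G hpos hred hna e f hme ⟨hslide_e, hslide_f⟩
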